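/- arXiv:1512.02505 — 8 statements merged into one kernel-verified Lean document; each statement's English description precedes it below -/
import Mathlib

section
/- There exists a finite simple graph G that does not admit a 2-star-coloring. Concretely, let G be the graph with vertex set {u, u_1, …, u_8, u_{21}, u_{22}, u_{23}, u_{24}, u_{31}, u_{32}, u_{33}, u_{34}} and edge set consisting of: u–u_i for all i = 1, …, 8; u_i–u_{i+1} for all i = 1, …, 7; u_2–u_{2j} for all j = 1, …, 4; u_{21}–u_{22}, u_{22}–u_{23}, u_{23}–u_{24}; u_3–u_{3j} for all j = 1, …, 4; and u_{31}–u_{32}, u_{32}–u_{33}, u_{33}–u_{34}. Then G admits no 2-star-coloring. -/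
/-- A `κ`-star-coloring of a simple graph `G` (with colors drawn from a type `α`
of `κ` colors) is a vertex coloring such that every monochromatic component is a
star (a tree of diameter at most 2); equivalently, there is no monochromatic
triangle and no monochromatic path on four distinct vertices. -/
def IsStarColoring {V α : Type*} (G : SimpleGraph V) (c : V → α) : Prop :=
  (∀ x y z : V, G.Adj x y → G.Adj y z → G.Adj x z → ¬(c x = c y ∧ c y = c z)) ∧
  (∀ a b d e : V, a ≠ b → a ≠ d → a ≠ e → b ≠ d → b ≠ e → d ≠ e →
    G.Adj a b → G.Adj b d → G.Adj d e → ¬(c a = c b ∧ c b = c d ∧ c d = c e))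

/-- The outerplanar counterexample graph of Lemma 1: vertex `0` is `u`,
vertices `1,…,8` are `u_1,…,u_8`, vertices `9,…,12` are `u_{21},…,u_{24}`,
and vertices `13,…,16` are `u_{31},…,u_{34}`. -/
def counterexampleGraph : SimpleGraph (Fin 17) :=
  SimpleGraph.fromEdgeSet
    {s(0,1), s(0,2), s(0,3), s(0,4), s(0,5), s(0,6), s(0,7), s(0,8),
     s(1,2), s(2,3), s(3,4), s(4,5), s(5,6), s(6,7), s(7,8),
     s(2,9), s(2,10), s(2,11), s(2,12),
     s(9,10), s(10,11), s(11,12),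
     s(3,13), s(3,14), s(3,15), s(3,16),
     s(13,14), s(14,15), s(15,16)}

/-- Membership in the explicit list of edges gives adjacency. -/
theorem adj_of {a b : Fin 17}
    (h : (s(a, b) ∈ ({s(0,1), s(0,2), s(0,3), s(0,4), s(0,5), s(0,6), s(0,7), s(0,8),
     s(1,2), s(2,3), s(3,4), s(4,5), s(5,6), s(6,7), s(7,8),
     s(2,9), s(2,10), s(2,11), s(2,12),
     s(9,10), s(10,11), s(11,12),
     s(3,13), s(3,14), s(3,15), s(3,16),
     s(13,14), s(14,15), s(15,16)} : Finset (Sym2 (Fin 17)))) ∧ a ≠ b) :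
    counterexampleGraph.Adj a b := by
  refine (SimpleGraph.fromEdgeSet_adj _).2 ⟨?_, h.2⟩
  have := h.1
  simp only [Finset.mem_insert, Finset.mem_singleton] at this
  simp only [Set.mem_insert_iff, Set.mem_singleton_iff]
  exact this

/-- The graph `counterexampleGraph` admits no 2-star-coloring. -/
theorem counterexampleGraph_not_two_star_colorable :
    ¬ ∃ c : Fin 17 → Fin 2, IsStarColoring counterexampleGraph c := by
  rintro ⟨c, -, hP⟩
  have two : ∀ p q r : Fin 2, p ≠ r → q ≠ r → p = q := by decide
  -- every path on four vertices meets both colors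
  have key : ∀ (k : Fin 2) (a b d e : Fin 17), a ≠ b → a ≠ d → a ≠ e → b ≠ d → b ≠ e → d ≠ e →
      counterexampleGraph.Adj a b → counterexampleGraph.Adj b d → counterexampleGraph.Adj d e →
      c a = k ∨ c b = k ∨ c d = k ∨ c e = k := by
    intro k a b d e h1 h2 h3 h4 h5 h6 h7 h8 h9
    by_contra! h
    obtain ⟨ha, hb, hd, he⟩ := h
    exact hP a b d e h1 h2 h3 h4 h5 h6 h7 h8 h9
      ⟨two _ _ k ha hb, two _ _ k hb hd, two _ _ k hd he⟩
  -- some neighbor of `u` among `u_5, …, u_8` has the color of `u`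
  obtain ⟨i, hi, hci⟩ : ∃ i : Fin 17, (i = 5 ∨ i = 6 ∨ i = 7 ∨ i = 8) ∧ c i = c 0 := by
    rcases key (c 0) 5 6 7 8 (by decide) (by decide) (by decide) (by decide) (by decide)
      (by decide) (by exact adj_of (by decide)) (by exact adj_of (by decide))
      (by exact adj_of (by decide)) with h | h | h | h <;> exact ⟨_, by simp, h⟩
  -- each color appears among the `u_{2j}` and among the `u_{3j}`
  have h2 : ∀ k, ∃ j : Fin 17, (j = 9 ∨ j = 10 ∨ j = 11 ∨ j = 12) ∧ c j = k := by
    intro k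
    rcases key k 9 10 11 12 (by decide) (by decide) (by decide) (by decide) (by decide)
      (by decide) (by exact adj_of (by decide)) (by exact adj_of (by decide))
      (by exact adj_of (by decide)) with h | h | h | h <;> exact ⟨_, by simp, h⟩
  have h3 : ∀ k, ∃ j : Fin 17, (j = 13 ∨ j = 14 ∨ j = 15 ∨ j = 16) ∧ c j = k := by
    intro k
    rcases key k 13 14 15 16 (by decide) (by decide) (by decide) (by decide) (by decide)
      (by decide) (by exact adj_of (by decide)) (by exact adj_of (by decide))
      (by exact adj_of (by decide)) with h | h | h | h <;> exact ⟨_, by simp, h⟩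
  have a0 : counterexampleGraph.Adj 0 i := by
    rcases hi with rfl | rfl | rfl | rfl <;> exact adj_of (by decide)
  have a2 : ∀ j : Fin 17, (j = 9 ∨ j = 10 ∨ j = 11 ∨ j = 12) → counterexampleGraph.Adj j 2 := by
    rintro j (rfl | rfl | rfl | rfl) <;> exact adj_of (by decide)
  have a3 : ∀ j : Fin 17, (j = 13 ∨ j = 14 ∨ j = 15 ∨ j = 16) → counterexampleGraph.Adj j 3 := by
    rintro j (rfl | rfl | rfl | rfl) <;> exact adj_of (by decide)
  have a20 : counterexampleGraph.Adj 2 0 := by exact adj_of (by decide)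
  have a30 : counterexampleGraph.Adj 3 0 := by exact adj_of (by decide)
  have a23 : counterexampleGraph.Adj 2 3 := by exact adj_of (by decide)
  have c2 : c 2 ≠ c 0 := by
    intro h
    obtain ⟨j, hj, hcj⟩ := h2 (c 2)
    exact hP j 2 0 i (by omega) (by omega) (by omega) (by omega) (by omega) (by omega)
      (a2 j hj) a20 a0 ⟨hcj, h, hci.symm⟩
  have c3 : c 3 ≠ c 0 := by
    intro h
    obtain ⟨j, hj, hcj⟩ := h3 (c 3)
    exact hP j 3 0 i (by omega) (by omega) (by omega) (by omega) (by omega) (by omega)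
      (a3 j hj) a30 a0 ⟨hcj, h, hci.symm⟩
  obtain ⟨j, hj, hcj⟩ := h2 (c 2)
  obtain ⟨l, hl, hcl⟩ := h3 (c 3)
  exact hP j 2 3 l (by omega) (by omega) (by omega) (by omega) (by omega) (by omega)
    (a2 j hj) a23 (a3 l hl).symm ⟨hcj, two _ _ _ c2 c3, hcl.symm⟩
end

section
/- Let F be the fan graph with vertex set {u, u_1, …, u_8} and edges u–u_i for all i = 1, …, 8 and u_i–u_{i+1} for all i = 1, …, 7. In every 2-star-coloring c of F, at least two of the vertices u_1, …, u_8 receive the same color as u (and hence u is the center of a monochromatic star). -/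
/-- The fan graph `F`: vertex `0` is `u` and vertices `1,…,8` are `u_1,…,u_8`,
with edges `u–u_i` for `i = 1,…,8` and `u_i–u_{i+1}` for `i = 1,…,7`. -/
def fanGraph : SimpleGraph (Fin 9) :=
  SimpleGraph.fromEdgeSet
    {s(0,1), s(0,2), s(0,3), s(0,4), s(0,5), s(0,6), s(0,7), s(0,8),
     s(1,2), s(2,3), s(3,4), s(4,5), s(5,6), s(6,7), s(7,8)}

/-- In every 2-star-coloring of the fan graph, at least two of the
vertices `u_1,…,u_8` receive the same color as `u`. -/
theorem fanGraph_two_neighbors_of_u_same_color (c : Fin 9 → Fin 2)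
    (h : IsStarColoring fanGraph c) :
    ∃ i j : Fin 9, i ≠ j ∧ i ≠ 0 ∧ j ≠ 0 ∧ c i = c 0 ∧ c j = c 0 := by
  obtain ⟨-, hp⟩ := h
  -- each of the two paths `u_1…u_4` and `u_5…u_8` has a vertex coloured like `u`
  have h1 : ∃ i : Fin 9, (i = 1 ∨ i = 2 ∨ i = 3 ∨ i = 4) ∧ c i = c 0 := by
    by_contra hn
    push Not at hn
    have a1 := hn 1 (by simp)
    have a2 := hn 2 (by simp)
    have a3 := hn 3 (by simp)
    have a4 := hn 4 (by simp)
    refine hp 1 2 3 4 (by decide) (by decide) (by decide) (by decide) (by decide) (by decide)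
      (by simp [fanGraph]) (by simp [fanGraph]) (by simp [fanGraph]) ?_
    omega
  have h2 : ∃ i : Fin 9, (i = 5 ∨ i = 6 ∨ i = 7 ∨ i = 8) ∧ c i = c 0 := by
    by_contra hn
    push Not at hn
    have a1 := hn 5 (by simp)
    have a2 := hn 6 (by simp)
    have a3 := hn 7 (by simp)
    have a4 := hn 8 (by simp)
    refine hp 5 6 7 8 (by decide) (by decide) (by decide) (by decide) (by decide) (by decide)
      (by simp [fanGraph]) (by simp [fanGraph]) (by simp [fanGraph]) ?_
    omega
  obtain ⟨i, hi, hci⟩ := h1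
  obtain ⟨j, hj, hcj⟩ := h2
  refine ⟨i, j, ?_, ?_, ?_, hci, hcj⟩ <;> omega
end

section
/- Every triangle strip admits a 2-star-coloring. Here a triangle strip on n ≥ 3 vertices is a graph whose vertices can be ordered w_1, …, w_n so that, setting T_1 = {w_1, w_2, w_3}, for each j = 2, …, n−2 the triangle T_j is obtained from T_{j−1} by removing one of its three vertices and adding the new vertex w_{j+2}, and the edge set of the graph is exactly the union over all j of the three edges spanned by the vertices of T_j. (Triangle strips are exactly the inner-triangulated outerpaths, i.e., maximal outerplanar graphs whose weak dual is a path.) Moreover such a coloring can be computed in linear time. -/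
/-- A labelling by colors `c` and roles `r` (`true` = center, `false` = leaf) certifying
that every monochromatic component of `E` is a star. -/
def StripGood {V : Type*} (E : V → V → Prop) (c r : V → Bool) : Prop :=
  (∀ a b, E a b → c a = c b → r a ≠ r b) ∧
  (∀ a b b', E a b → E a b' → c b = c a → c b' = c a → r a = false → b = b')

/-- First invariant of a kept pair. -/
def StripA {V : Type*} (E : V → V → Prop) (y z : V) : Prop :=
  (∀ q, ∃ c r, StripGood E c r ∧ c y ≠ c z ∧ r y = true ∧ r z = q ∧
    ∀ v, E z v → c v ≠ c z) ∧
  (∃ c r, StripGood E c r ∧ c y = c z ∧ r y = true ∧ r z = false)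

/-- Second invariant of a kept pair. -/
def StripB {V : Type*} (E : V → V → Prop) (y z : V) : Prop :=
  (∀ q, ∃ c r, StripGood E c r ∧ c y ≠ c z ∧ r y = q ∧ r z = !q) ∧
  (∀ q, ∃ c r, StripGood E c r ∧ c y = c z ∧ r y = q ∧ r z = !q)

/-- The invariant of a kept pair. -/
def StripP {V : Type*} (E : V → V → Prop) (y z : V) : Prop :=
  StripA E y z ∨ StripA E z y ∨ StripB E y z

/-- Adding a new vertex `w` adjacent to `y` and `z`. -/
def StripExt {V : Type*} (E : V → V → Prop) (y z w : V) (a b : V) : Prop :=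
  E a b ∨ (a = w ∧ (b = y ∨ b = z)) ∨ (b = w ∧ (a = y ∨ a = z))

theorem stripB_symm {V : Type*} {E : V → V → Prop} {y z : V} (h : StripB E y z) :
    StripB E z y := by
  constructor
  · intro q
    obtain ⟨c, r, h1, h2, h3, h4⟩ := h.1 (!q)
    exact ⟨c, r, h1, h2.symm, by simpa using h4, h3⟩
  · intro q
    obtain ⟨c, r, h1, h2, h3, h4⟩ := h.2 (!q)
    exact ⟨c, r, h1, h2.symm, by simpa using h4, h3⟩

theorem stripP_symm {V : Type*} {E : V → V → Prop} {y z : V} (h : StripP E y z) :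
    StripP E z y := by
  rcases h with h | h | h
  · exact Or.inr (Or.inl h)
  · exact Or.inl h
  · exact Or.inr (Or.inr (stripB_symm h))

theorem stripExt_swap {V : Type*} (E : V → V → Prop) (y z w : V) :
    StripExt E y z w = StripExt E z y w := by
  funext a b
  simp only [StripExt, eq_iff_iff]
  tauto

/-- Extending a labelling to a new vertex. -/
theorem stripGood_ext {V : Type*} {E : V → V → Prop} {y z w : V} {c r : V → Bool}
    (hw : ∀ a, ¬ E a w) (hw' : ∀ a, ¬ E w a) (hy : w ≠ y) (hz : w ≠ z)
    (h : StripGood E c r) (k q : Bool)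
    (h1 : k = c y → r y = !q) (h2 : k = c z → r z = !q)
    (h3 : k = c y → r y = false → ∀ v, E y v → c v ≠ c y)
    (h4 : k = c z → r z = false → ∀ v, E z v → c v ≠ c z)
    (h5 : q = false → k = c y → k ≠ c z) :
    ∃ c' r', StripGood (StripExt E y z w) c' r' ∧ c' w = k ∧ r' w = q ∧
      c' y = c y ∧ c' z = c z ∧ r' y = r y ∧ r' z = r z ∧ ∀ v, v ≠ w → c' v = c v := by
  classical
  refine ⟨Function.update c w k, Function.update r w q, ⟨?_, ?_⟩, ?_⟩
  · intro a b hab hc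
    have := h.1 a b
    unfold StripExt at hab
    simp only [Function.update_apply] at *
    grind
  · intro a b b' hab hab' hc hc' hr
    have := h.2 a b b'
    unfold StripExt at hab hab'
    simp only [Function.update_apply] at *
    grind
  · simp only [Function.update_apply]
    grind

theorem stripA_step {V : Type*} {E : V → V → Prop} {y z w : V}
    (hw : ∀ a, ¬ E a w) (hw' : ∀ a, ¬ E w a) (hy : w ≠ y) (hz : w ≠ z) (hyz : y ≠ z)
    (h : StripA E y z) :
    StripA (StripExt E y z w) y z ∧ StripA (StripExt E y z w) y w ∧
      StripB (StripExt E y z w) z w := by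
  obtain ⟨hD, c₀, r₀, g₀, e₀, ry₀, rz₀⟩ := h
  -- the new vertex gets the other color
  have hS : ∀ q, ∃ c r, StripGood (StripExt E y z w) c r ∧ c y = c z ∧ c w ≠ c y ∧
      r y = true ∧ r z = false ∧ r w = q := by
    intro q
    obtain ⟨c, r, g, a1, a2, a3, a4, a5, a6, a7⟩ :=
      stripGood_ext hw hw' hy hz g₀ (!(c₀ y)) q (by simp) (by simp [e₀]) (by simp)
        (by simp [e₀]) (by simp)
    exact ⟨c, r, g, by grind, by grind, by grind, by grind, a2⟩
  -- the new vertex is a leaf of `y`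
  have hY : ∀ q, ∃ c r, StripGood (StripExt E y z w) c r ∧ c y ≠ c z ∧ c w = c y ∧
      r y = true ∧ r z = q ∧ r w = false ∧ ∀ v, StripExt E y z w z v → c v ≠ c z := by
    intro q
    obtain ⟨c₁, r₁, g₁, e₁, ry₁, rz₁, i₁⟩ := hD q
    obtain ⟨c, r, g, a1, a2, a3, a4, a5, a6, a7⟩ :=
      stripGood_ext hw hw' hy hz g₁ (c₁ y) false (by simp [ry₁]) (by simp [e₁])
        (by simp [ry₁]) (by simp [e₁]) (by simp [e₁])
    refine ⟨c, r, g, by grind, by grind, by grind, by grind, a2, ?_⟩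
    intro v hv
    unfold StripExt at hv
    grind
  -- the new vertex is matched with `z`
  have hZ : ∀ q, ∃ c r, StripGood (StripExt E y z w) c r ∧ c y ≠ c z ∧ c w = c z ∧
      r y = true ∧ r z = q ∧ r w = !q := by
    intro q
    obtain ⟨c₁, r₁, g₁, e₁, ry₁, rz₁, i₁⟩ := hD q
    obtain ⟨c, r, g, a1, a2, a3, a4, a5, a6, a7⟩ :=
      stripGood_ext hw hw' hy hz g₁ (c₁ z) (!q) (by grind) (by simp [rz₁])
        (by grind) (by grind) (by grind)
    exact ⟨c, r, g, by grind, by grind, by grind, by grind, a2⟩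
  refine ⟨⟨?_, ?_⟩, ⟨?_, ?_⟩, ⟨?_, ?_⟩⟩
  · intro q
    obtain ⟨c, r, g, a1, a2, a3, a4, a5, a6⟩ := hY q
    exact ⟨c, r, g, a1, a3, a4, a6⟩
  · obtain ⟨c, r, g, a1, a2, a3, a4, a5⟩ := hS true
    exact ⟨c, r, g, a1, a3, a4⟩
  · intro q
    obtain ⟨c, r, g, a1, a2, a3, a4, a5⟩ := hS q
    refine ⟨c, r, g, a2.symm, a3, a5, ?_⟩
    intro v hv
    unfold StripExt at hv
    grind
  · obtain ⟨c, r, g, a1, a2, a3, a4, a5, a6⟩ := hY true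
    exact ⟨c, r, g, a2.symm, a3, a5⟩
  · intro q
    cases q
    · obtain ⟨c, r, g, a1, a2, a3, a4, a5⟩ := hS true
      exact ⟨c, r, g, by grind, a4, a5⟩
    · obtain ⟨c, r, g, a1, a2, a3, a4, a5, a6⟩ := hY true
      exact ⟨c, r, g, by grind, a4, a5⟩
  · intro q
    obtain ⟨c, r, g, a1, a2, a3, a4, a5⟩ := hZ q
    exact ⟨c, r, g, a2.symm, a4, a5⟩

theorem stripB_step_aux {V : Type*} {E : V → V → Prop} {y z w : V}
    (hw : ∀ a, ¬ E a w) (hw' : ∀ a, ¬ E w a) (hy : w ≠ y) (hz : w ≠ z)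
    (h : StripB E y z) :
    StripB (StripExt E y z w) y z ∧ StripA (StripExt E y z w) y w := by
  have hS : ∀ q q', ∃ c r, StripGood (StripExt E y z w) c r ∧ c y = c z ∧ c w ≠ c y ∧
      r y = q ∧ r z = (!q) ∧ r w = q' := by
    intro q q'
    obtain ⟨c₀, r₀, g₀, e₀, ry₀, rz₀⟩ := h.2 q
    obtain ⟨c, r, g, a1, a2, a3, a4, a5, a6, a7⟩ :=
      stripGood_ext hw hw' hy hz g₀ (!(c₀ y)) q' (by simp) (by simp [e₀]) (by simp)
        (by simp [e₀]) (by simp)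
    exact ⟨c, r, g, by grind, by grind, by grind, by grind, a2⟩
  have hY : ∃ c r, StripGood (StripExt E y z w) c r ∧ c y ≠ c z ∧ c w = c y ∧
      r y = true ∧ r z = false ∧ r w = false := by
    obtain ⟨c₁, r₁, g₁, e₁, ry₁, rz₁⟩ := h.1 true
    obtain ⟨c, r, g, a1, a2, a3, a4, a5, a6, a7⟩ :=
      stripGood_ext hw hw' hy hz g₁ (c₁ y) false (by simp [ry₁]) (by simp [e₁])
        (by simp [ry₁]) (by simp [e₁]) (by simp [e₁])
    exact ⟨c, r, g, by grind, by grind, by grind, by grind, a2⟩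
  have hZ : ∃ c r, StripGood (StripExt E y z w) c r ∧ c y ≠ c z ∧
      r y = false ∧ r z = true := by
    obtain ⟨c₁, r₁, g₁, e₁, ry₁, rz₁⟩ := h.1 false
    obtain ⟨c, r, g, a1, a2, a3, a4, a5, a6, a7⟩ :=
      stripGood_ext hw hw' hy hz g₁ (c₁ z) false (by grind) (by grind)
        (by grind) (by grind) (by grind)
    exact ⟨c, r, g, by grind, by grind, by grind⟩
  refine ⟨⟨?_, ?_⟩, ⟨?_, ?_⟩⟩
  · intro q
    cases q
    · exact hZ
    · obtain ⟨c, r, g, a1, a2, a3, a4, a5⟩ := hY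
      exact ⟨c, r, g, a1, a3, a4⟩
  · intro q
    obtain ⟨c, r, g, a1, a2, a3, a4, a5⟩ := hS q true
    exact ⟨c, r, g, a1, a3, a4⟩
  · intro q
    obtain ⟨c, r, g, a1, a2, a3, a4, a5⟩ := hS true q
    refine ⟨c, r, g, a2.symm, a3, a5, ?_⟩
    intro v hv
    unfold StripExt at hv
    grind
  · obtain ⟨c, r, g, a1, a2, a3, a4, a5⟩ := hY
    exact ⟨c, r, g, a2.symm, a3, a5⟩

theorem stripP_step {V : Type*} {E : V → V → Prop} {y z w : V}
    (hw : ∀ a, ¬ E a w) (hw' : ∀ a, ¬ E w a) (hy : w ≠ y) (hz : w ≠ z) (hyz : y ≠ z)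
    (h : StripP E y z) :
    StripP (StripExt E y z w) y z ∧ StripP (StripExt E y z w) y w ∧
      StripP (StripExt E y z w) z w := by
  rcases h with h | h | h
  · obtain ⟨h1, h2, h3⟩ := stripA_step hw hw' hy hz hyz h
    exact ⟨Or.inl h1, Or.inl h2, Or.inr (Or.inr h3)⟩
  · obtain ⟨h1, h2, h3⟩ := stripA_step hw hw' hz hy hyz.symm h
    rw [stripExt_swap]
    exact ⟨Or.inr (Or.inl h1), Or.inr (Or.inr h3), Or.inl h2⟩
  · obtain ⟨h1, h2⟩ := stripB_step_aux hw hw' hy hz h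
    obtain ⟨-, h3⟩ := stripB_step_aux hw hw' hz hy (stripB_symm h)
    rw [stripExt_swap] at h3
    exact ⟨Or.inr (Or.inr h1), Or.inl h2, Or.inl h3⟩

/-- The base case: a single edge. -/
theorem stripB_edge {V : Type*} {y z : V} (hyz : y ≠ z) :
    StripB (fun a b => (a = y ∧ b = z) ∨ (a = z ∧ b = y)) y z := by
  classical
  constructor
  · intro q
    refine ⟨fun v => decide (v = y), fun v => if v = y then q else !q, ⟨?_, ?_⟩, ?_⟩ <;> grind
  · intro q
    refine ⟨fun _ => true, fun v => if v = y then q else !q, ⟨?_, ?_⟩, ?_⟩ <;> grind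

/-- Some good labelling exists under the invariant. -/
theorem stripP_good {V : Type*} {E : V → V → Prop} {y z : V} (h : StripP E y z) :
    ∃ c r, StripGood E c r := by
  rcases h with h | h | h
  · obtain ⟨c, r, g, -⟩ := h.2
    exact ⟨c, r, g⟩
  · obtain ⟨c, r, g, -⟩ := h.2
    exact ⟨c, r, g⟩
  · obtain ⟨c, r, g, -⟩ := h.2 true
    exact ⟨c, r, g⟩

/-- The edges spanned by the first triangles. -/
def StripE {V : Type*} (T : ℕ → Set V) (m : ℕ) (a b : V) : Prop :=
  a ≠ b ∧ ∃ j ≤ m, a ∈ T j ∧ b ∈ T j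

/-- One step of the strip, phrased for a triangle with the dropped vertex last. -/
theorem strip_step {V : Type*} {T : ℕ → Set V} {m : ℕ} {y z x w : V}
    (hT : T m = {y, z, x}) (hT' : T (m + 1) = insert w (T m \ {x}))
    (hyz : y ≠ z) (hyx : y ≠ x) (hzx : z ≠ x)
    (hw : ∀ j ≤ m, w ∉ T j) (hP : StripP (StripE T m) y z) :
    ∃ y z x, T (m + 1) = {y, z, x} ∧ y ≠ z ∧ y ≠ x ∧ z ≠ x ∧
      StripP (StripE T (m + 1)) y z ∧ StripP (StripE T (m + 1)) y x ∧
      StripP (StripE T (m + 1)) z x := by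
  have hwm := hw m le_rfl
  rw [hT] at hwm
  have hwy : w ≠ y := by
    rintro rfl
    simp at hwm
  have hwz : w ≠ z := by
    rintro rfl
    simp at hwm
  have hT'' : T (m + 1) = {y, z, w} := by
    rw [hT', hT]
    ext v
    simp only [Set.mem_insert_iff, Set.mem_sdiff, Set.mem_singleton_iff]
    grind
  have hE : StripE T (m + 1) = StripExt (StripE T m) y z w := by
    funext a b
    apply propext
    constructor
    · rintro ⟨hab, j, hj, ha, hb⟩
      rcases Nat.le_succ_iff.mp hj with hj | hj
      · exact Or.inl ⟨hab, j, hj, ha, hb⟩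
      · subst hj
        have hT3 : T m.succ = {y, z, w} := hT''
        rw [hT3] at ha hb
        simp only [Set.mem_insert_iff, Set.mem_singleton_iff] at ha hb
        have hm : ∀ a b, a ≠ b → (a = y ∨ a = z) → (b = y ∨ b = z) → StripE T m a b := by
          intro a b hab ha hb
          refine ⟨hab, m, le_rfl, ?_, ?_⟩
          · rw [hT]
            rcases ha with rfl | rfl <;> simp
          · rw [hT]
            rcases hb with rfl | rfl <;> simp
        have := hm a b hab
        unfold StripExt
        grind
    · rintro (⟨hab, j, hj, ha, hb⟩ | ⟨rfl, rfl | rfl⟩ | ⟨rfl, rfl | rfl⟩)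
      · exact ⟨hab, j, by omega, ha, hb⟩
      · exact ⟨hwy, m + 1, le_rfl, by simp [hT''], by simp [hT'']⟩
      · exact ⟨hwz, m + 1, le_rfl, by simp [hT''], by simp [hT'']⟩
      · exact ⟨hwy.symm, m + 1, le_rfl, by simp [hT''], by simp [hT'']⟩
      · exact ⟨hwz.symm, m + 1, le_rfl, by simp [hT''], by simp [hT'']⟩
  refine ⟨y, z, w, hT'', hyz, hwy.symm, hwz.symm, ?_⟩
  rw [hE]
  refine stripP_step ?_ ?_ hwy hwz hyz hP
  · rintro a ⟨-, j, hj, -, h⟩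
    exact hw j hj h
  · rintro a ⟨-, j, hj, h, -⟩
    exact hw j hj h

/-- Every triangle strip admits a 2-star-coloring. A triangle strip
on `n ≥ 3` vertices is a graph whose vertices can be ordered `w 0, …, w (n-1)`
(here `w : Fin n ≃ V` is the ordering, 0-indexed) so that, with
`T 0 = {w 0, w 1, w 2}` and, for each `j = 1, …, n-3`, the triangle `T j`
obtained from `T (j-1)` by removing one of its vertices and adding the new
vertex `w (j+2)`, the edge set of the graph is exactly the union over all `j`
of the three edges spanned by the vertices of `T j`. -/
theorem triangleStrip_two_star_colorable
    {n : ℕ} (hn : 3 ≤ n) {V : Type*} (G : SimpleGraph V)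
    (w : Fin n ≃ V) (T : ℕ → Set V)
    (hT0 : T 0 = {w ⟨0, by omega⟩, w ⟨1, by omega⟩, w ⟨2, by omega⟩})
    (hTstep : ∀ j (hj1 : 1 ≤ j) (hj2 : j ≤ n - 3),
      ∃ x ∈ T (j - 1), T j = insert (w ⟨j + 2, by omega⟩) (T (j - 1) \ {x}))
    (hAdj : ∀ a b : V, G.Adj a b ↔ a ≠ b ∧ ∃ j ≤ n - 3, a ∈ T j ∧ b ∈ T j) :
    ∃ c : V → Fin 2, IsStarColoring G c := by
  have key : ∀ m ≤ n - 3, (∀ j ≤ m, ∀ i : Fin n, w i ∈ T j → i.val ≤ j + 2) ∧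
      ∃ y z x, T m = {y, z, x} ∧ y ≠ z ∧ y ≠ x ∧ z ≠ x ∧
        StripP (StripE T m) y z ∧ StripP (StripE T m) y x ∧ StripP (StripE T m) z x := by
    intro m
    induction m with
    | zero =>
      intro _
      constructor
      · intro j hj i hi
        obtain rfl : j = 0 := by omega
        rw [hT0] at hi
        simp only [Set.mem_insert_iff, Set.mem_singleton_iff, w.injective.eq_iff] at hi
        rcases hi with rfl | rfl | rfl <;> simp
      · have h01 : w ⟨0, by omega⟩ ≠ w ⟨1, by omega⟩ := by simp [w.injective.eq_iff]
        have h02 : w ⟨0, by omega⟩ ≠ w ⟨2, by omega⟩ := by simp [w.injective.eq_iff]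
        have h12 : w ⟨1, by omega⟩ ≠ w ⟨2, by omega⟩ := by simp [w.injective.eq_iff]
        refine ⟨_, _, _, hT0, h01, h02, h12, ?_⟩
        have hE : StripE T 0 = StripExt (fun a b =>
            (a = w ⟨0, by omega⟩ ∧ b = w ⟨1, by omega⟩) ∨
            (a = w ⟨1, by omega⟩ ∧ b = w ⟨0, by omega⟩))
            (w ⟨0, by omega⟩) (w ⟨1, by omega⟩) (w ⟨2, by omega⟩) := by
          funext a b
          simp only [StripE, StripExt, Nat.le_zero, exists_eq_left, hT0, Set.mem_insert_iff,
            Set.mem_singleton_iff, eq_iff_iff]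
          grind
        rw [hE]
        refine stripP_step ?_ ?_ h02.symm h12.symm h01 (Or.inr (Or.inr (stripB_edge h01)))
        · grind
        · grind
    | succ m ih =>
      intro hm
      obtain ⟨hb, y, z, x, hT, hyz, hyx, hzx, p1, p2, p3⟩ := ih (by omega)
      obtain ⟨d, hd, hT'⟩ := hTstep (m + 1) (by omega) hm
      simp only [Nat.add_sub_cancel] at hd hT'
      have hw : ∀ j ≤ m, w ⟨m + 1 + 2, by omega⟩ ∉ T j := by
        intro j hj h
        have := hb j hj _ h
        simp only at this
        omega
      constructor
      · intro j hj i hi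
        rcases Nat.le_succ_iff.mp hj with hj | hj
        · exact hb j hj i hi
        · subst hj
          have hT3 := hT'
          change T m.succ = _ at hT3
          rw [hT3] at hi
          rcases hi with hi | hi
          · have := w.injective hi
            subst this
            simp
          · have := hb m le_rfl i hi.1
            omega
      · rw [hT] at hd
        rcases hd with rfl | rfl | rfl
        · refine strip_step (y := z) (z := x) ?_ hT' hzx hyz.symm hyx.symm hw p3
          rw [hT]
          ext v
          simp only [Set.mem_insert_iff, Set.mem_singleton_iff]
          tauto
        · refine strip_step (y := y) (z := x) ?_ hT' hyx hyz hzx.symm hw p2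
          rw [hT]
          ext v
          simp only [Set.mem_insert_iff, Set.mem_singleton_iff]
          tauto
        · exact strip_step hT hT' hyz hyx hzx hw p1
  obtain ⟨-, y, z, x, -, -, -, -, hP, -⟩ := key (n - 3) le_rfl
  obtain ⟨c, r, g1, g2⟩ := stripP_good hP
  have hG : ∀ a b, G.Adj a b → StripE T (n - 3) a b := fun a b h => (hAdj a b).mp h
  have hc : ∀ a b, (if c a then (1 : Fin 2) else 0) = (if c b then (1 : Fin 2) else 0) →
      c a = c b := by
    intro a b
    cases c a <;> cases c b <;> simp
  refine ⟨fun v => if c v then 1 else 0, ?_, ?_⟩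
  · rintro a b d hab hbd had ⟨h1, h2⟩
    have e1 := hc _ _ h1
    have e2 := hc _ _ h2
    have f1 := g1 a b (hG _ _ hab) e1
    have f2 := g1 b d (hG _ _ hbd) e2
    have f3 := g1 a d (hG _ _ had) (e1.trans e2)
    revert f1 f2 f3
    cases r a <;> cases r b <;> cases r d <;> simp
  · rintro a b d e - had - - hbe - hab hbd hde ⟨h1, h2, h3⟩
    have e1 := hc _ _ h1
    have e2 := hc _ _ h2
    have e3 := hc _ _ h3
    have f := g1 b d (hG _ _ hbd) e2
    have k1 := g2 b a d (hG _ _ hab.symm) (hG _ _ hbd) e1 e2.symm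
    have k2 := g2 d b e (hG _ _ hbd.symm) (hG _ _ hde) e2 e3.symm
    cases hb : r b
    · exact had (k1 hb)
    · cases hd : r d
      · exact hbe (k2 hd)
      · exact f (hb.trans hd.symm)
end

section
/- Let B be the graph with vertex set {u_1, u_2, v_1, v_2, v_3, v_4} and edges: u_1–u_2; the path edges v_1–v_2, v_2–v_3, v_3–v_4; and u_i–v_j for all i ∈ {1,2} and j ∈ {1,2,3,4}. In every 2-star-coloring c of B, the vertices u_1 and u_2 receive different colors. -/
/-- The gadget graph `B`: vertices `0,1` are `u_1,u_2` and vertices `2,3,4,5`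
are `v_1,v_2,v_3,v_4`; edges are `u_1–u_2`, the path `v_1–v_2–v_3–v_4`, and
`u_i–v_j` for all `i ∈ {1,2}`, `j ∈ {1,2,3,4}`. -/
def gadgetB : SimpleGraph (Fin 6) :=
  SimpleGraph.fromEdgeSet
    {s(0,1),
     s(2,3), s(3,4), s(4,5),
     s(0,2), s(0,3), s(0,4), s(0,5),
     s(1,2), s(1,3), s(1,4), s(1,5)}

/-- In every 2-star-coloring of `B`, the vertices `u_1` and `u_2`
receive different colors. -/
theorem gadgetB_u1_u2_different (c : Fin 6 → Fin 2)
    (h : IsStarColoring gadgetB c) : c 0 ≠ c 1 := by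
  intro h01
  obtain ⟨ht, hp⟩ := h
  have t2 := ht 0 1 2 (by simp [gadgetB]) (by simp [gadgetB]) (by simp [gadgetB])
  have t3 := ht 0 1 3 (by simp [gadgetB]) (by simp [gadgetB]) (by simp [gadgetB])
  have t4 := ht 0 1 4 (by simp [gadgetB]) (by simp [gadgetB]) (by simp [gadgetB])
  have t5 := ht 0 1 5 (by simp [gadgetB]) (by simp [gadgetB]) (by simp [gadgetB])
  have p := hp 2 3 4 5 (by decide) (by decide) (by decide) (by decide) (by decide) (by decide)
    (by simp [gadgetB]) (by simp [gadgetB]) (by simp [gadgetB])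
  omega
end

section
/- Let B be the graph with vertex set {u_1, u_2, v_1, v_2, v_3, v_4} and edges: u_1–u_2; the path edges v_1–v_2, v_2–v_3, v_3–v_4; and u_i–v_j for all i ∈ {1,2} and j ∈ {1,2,3,4}. In every 2-star-coloring c of B, the colors alternate along the path v_1, v_2, v_3, v_4; that is, c(v_1) ≠ c(v_2), c(v_2) ≠ c(v_3), and c(v_3) ≠ c(v_4). -/
/-- In every 2-star-coloring of `B`, the colors alternate along the
path `v_1, v_2, v_3, v_4`. -/
theorem gadgetB_path_alternates (c : Fin 6 → Fin 2)
    (h : IsStarColoring gadgetB c) :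
    c 2 ≠ c 3 ∧ c 3 ≠ c 4 ∧ c 4 ≠ c 5 := by
  obtain ⟨ht, hp⟩ := h
  have adj : ∀ x y : Fin 6, gadgetB.Adj x y ↔ (s(x, y) ∈ ({s(0,1),
     s(2,3), s(3,4), s(4,5),
     s(0,2), s(0,3), s(0,4), s(0,5),
     s(1,2), s(1,3), s(1,4), s(1,5)} : Set (Sym2 (Fin 6))) ∧ x ≠ y) := by
    intro x y
    simp [gadgetB]
  have t2 := ht 0 1 2 (by simp [adj]) (by simp [adj]) (by simp [adj])
  have t3 := ht 0 1 3 (by simp [adj]) (by simp [adj]) (by simp [adj])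
  have t4 := ht 0 1 4 (by simp [adj]) (by simp [adj]) (by simp [adj])
  have t5 := ht 0 1 5 (by simp [adj]) (by simp [adj]) (by simp [adj])
  have a2 := ht 0 2 3 (by simp [adj]) (by simp [adj]) (by simp [adj])
  have a3 := ht 0 3 4 (by simp [adj]) (by simp [adj]) (by simp [adj])
  have a4 := ht 0 4 5 (by simp [adj]) (by simp [adj]) (by simp [adj])
  have b2 := ht 1 2 3 (by simp [adj]) (by simp [adj]) (by simp [adj])
  have b3 := ht 1 3 4 (by simp [adj]) (by simp [adj]) (by simp [adj])
  have b4 := ht 1 4 5 (by simp [adj]) (by simp [adj]) (by simp [adj])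
  have p := hp 2 3 4 5 (by decide) (by decide) (by decide) (by decide) (by decide) (by decide)
    (by simp [adj]) (by simp [adj]) (by simp [adj])
  clear ht hp adj
  generalize c 0 = x0 at *
  generalize c 1 = x1 at *
  generalize c 2 = x2 at *
  generalize c 3 = x3 at *
  generalize c 4 = x4 at *
  generalize c 5 = x5 at *
  omega
end

section
/- For k ≥ 1, let the chain of length k be the graph with vertices u_1^i, u_2^i, v_1^i, v_2^i, v_3^i, v_4^i for i = 1, …, k, where for each i the edges are u_1^i–u_2^i, the path edges v_1^i–v_2^i, v_2^i–v_3^i, v_3^i–v_4^i, and u_a^i–v_b^i for all a ∈ {1,2}, b ∈ {1,2,3,4}, together with the connecting edges v_4^i–v_1^{i+1} for i = 1, …, k−1. In every 2-star-coloring c of the chain of length k, the colors alternate along the entire spine-path v_1^1, v_2^1, v_3^1, v_4^1, v_1^2, …, v_4^k; that is, any two consecutive vertices on this path receive different colors. In particular, all odd-positioned vertices of the spine-path receive one color and all even-positioned vertices receive the other. -/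
/-- The chain of length `k`: for each `i : Fin k`, the vertices `(i, 0), (i, 1)`
are `u_1^i, u_2^i` and `(i, 2), (i, 3), (i, 4), (i, 5)` are
`v_1^i, v_2^i, v_3^i, v_4^i`. Within each copy the edges are `u_1^i–u_2^i`, the
path `v_1^i–v_2^i–v_3^i–v_4^i`, and `u_a^i–v_b^i` for all `a ∈ {1,2}`,
`b ∈ {1,2,3,4}`; consecutive copies are connected by the edges
`v_4^i–v_1^{i+1}`. -/
def chainGraph (k : ℕ) : SimpleGraph (Fin k × Fin 6) :=
  SimpleGraph.fromRel (fun x y =>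
    (x.1 = y.1 ∧ ((x.2 = 0 ∧ y.2 = 1) ∨ (x.2 = 2 ∧ y.2 = 3) ∨ (x.2 = 3 ∧ y.2 = 4) ∨
      (x.2 = 4 ∧ y.2 = 5) ∨ (x.2 ≤ 1 ∧ 2 ≤ y.2))) ∨
    ((x.1 : ℕ) + 1 = (y.1 : ℕ) ∧ x.2 = 5 ∧ y.2 = 2))

/-- The `p`-th vertex (0-indexed) of the spine-path
`v_1^1, v_2^1, v_3^1, v_4^1, v_1^2, …, v_4^k` of the chain of length `k`. -/
def spineVertex (k : ℕ) (p : ℕ) (hp : p < 4 * k) : Fin k × Fin 6 :=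
  (⟨p / 4, by omega⟩, ⟨p % 4 + 2, by omega⟩)

theorem chain_adj_in (k : ℕ) (i : Fin k) (a b : Fin 6)
    (h : (a = 0 ∧ b = 1) ∨ (a = 2 ∧ b = 3) ∨ (a = 3 ∧ b = 4) ∨
      (a = 4 ∧ b = 5) ∨ (a ≤ 1 ∧ 2 ≤ b)) : (chainGraph k).Adj (i, a) (i, b) := by
  rw [chainGraph, SimpleGraph.fromRel_adj]
  refine ⟨?_, Or.inl (Or.inl ⟨rfl, h⟩)⟩
  intro e
  have e2 : a = b := congrArg Prod.snd e
  omega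

theorem chain_adj_out (k : ℕ) (i j : Fin k) (h : (i : ℕ) + 1 = j) :
    (chainGraph k).Adj (i, 5) (j, 2) := by
  rw [chainGraph, SimpleGraph.fromRel_adj]
  refine ⟨?_, Or.inl (Or.inr ⟨h, rfl, rfl⟩)⟩
  intro e
  have e2 : (5 : Fin 6) = 2 := congrArg Prod.snd e
  omega

/-- The two hub vertices of a copy get different colors. -/
theorem chain_hub_ne (k : ℕ) (c : Fin k × Fin 6 → Fin 2)
    (h : IsStarColoring (chainGraph k) c) (i : Fin k) : c (i, 0) ≠ c (i, 1) := by
  intro e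
  have hv : ∀ b : Fin 6, 2 ≤ b → c (i, b) ≠ c (i, 1) := by
    intro b hb e'
    exact h.1 (i, 0) (i, 1) (i, b) (chain_adj_in k i 0 1 (by simp))
      (chain_adj_in k i 1 b (by simp [hb])) (chain_adj_in k i 0 b (by simp [hb]))
      ⟨e, e'.symm⟩
  have h2 := hv 2 (by decide)
  have h3 := hv 3 (by decide)
  have h4 := hv 4 (by decide)
  have h5 := hv 5 (by decide)
  refine h.2 (i, 2) (i, 3) (i, 4) (i, 5) (by simp) (by simp) (by simp) (by simp) (by simp)
    (by simp) (chain_adj_in k i 2 3 (by simp)) (chain_adj_in k i 3 4 (by simp))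
    (chain_adj_in k i 4 5 (by simp)) ⟨?_, ?_, ?_⟩ <;> omega

/-- Every color occurs on a hub vertex of every copy. -/
theorem chain_hub_color (k : ℕ) (c : Fin k × Fin 6 → Fin 2)
    (h : IsStarColoring (chainGraph k) c) (i : Fin k) (x : Fin 2) :
    ∃ a : Fin 6, a ≤ 1 ∧ c (i, a) = x := by
  have := chain_hub_ne k c h i
  by_cases e : c (i, 0) = x
  · exact ⟨0, by decide, e⟩
  · exact ⟨1, by decide, by omega⟩

theorem chain_in_ne (k : ℕ) (c : Fin k × Fin 6 → Fin 2)
    (h : IsStarColoring (chainGraph k) c) (i : Fin k) (a b : Fin 6) (ha : 2 ≤ a) (hb : 2 ≤ b)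
    (hab : (chainGraph k).Adj (i, a) (i, b)) : c (i, a) ≠ c (i, b) := by
  intro e
  obtain ⟨u, hu, hc⟩ := chain_hub_color k c h i (c (i, a))
  exact h.1 (i, u) (i, a) (i, b) (chain_adj_in k i u a (by simp [hu, ha])) hab
    (chain_adj_in k i u b (by simp [hu, hb])) ⟨hc, e⟩

theorem chain_out_ne (k : ℕ) (c : Fin k × Fin 6 → Fin 2)
    (h : IsStarColoring (chainGraph k) c) (i j : Fin k) (hij : (i : ℕ) + 1 = j) :
    c (i, 5) ≠ c (j, 2) := by
  intro e
  obtain ⟨u, hu, hc⟩ := chain_hub_color k c h i (c (i, 5))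
  obtain ⟨w, hw, hd⟩ := chain_hub_color k c h j (c (j, 2))
  have hne : i ≠ j := by rintro rfl; omega
  have hu5 := chain_adj_in k i u 5 (Or.inr (Or.inr (Or.inr (Or.inr ⟨hu, by decide⟩))))
  have hw2 := chain_adj_in k j w 2 (Or.inr (Or.inr (Or.inr (Or.inr ⟨hw, by decide⟩))))
  exact h.2 (i, u) (i, 5) (j, 2) (j, w) hu5.ne (by simp [hne]) (by simp [hne]) (by simp [hne])
    (by simp [hne]) hw2.ne.symm hu5 (chain_adj_out k i j hij) hw2.symm ⟨hc, e, hd.symm⟩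

/-- In every 2-star-coloring of the chain of length `k ≥ 1`, any
two consecutive vertices of the spine-path receive different colors; in
particular, the odd-positioned spine vertices all get one color and the
even-positioned ones get the other (two spine vertices have the same color iff
their positions have the same parity). -/
theorem chainGraph_spine_alternates (k : ℕ) (hk : 1 ≤ k)
    (c : Fin k × Fin 6 → Fin 2) (h : IsStarColoring (chainGraph k) c) :
    (∀ p (hp : p + 1 < 4 * k),
      c (spineVertex k p (by omega)) ≠ c (spineVertex k (p + 1) hp)) ∧
    (∀ p q (hp : p < 4 * k) (hq : q < 4 * k),
      c (spineVertex k p hp) = c (spineVertex k q hq) ↔ p % 2 = q % 2) := by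
  have key : ∀ p (hp : p + 1 < 4 * k),
      c (spineVertex k p (by omega)) ≠ c (spineVertex k (p + 1) hp) := by
    intro p hp
    have hlt : p / 4 < k := by omega
    have hcase : p % 4 = 0 ∨ p % 4 = 1 ∨ p % 4 = 2 ∨ p % 4 = 3 := by omega
    have hin : ∀ a b : Fin 6, 2 ≤ a → 2 ≤ b → (a : ℕ) = p % 4 + 2 → (b : ℕ) = (p + 1) % 4 + 2 →
        (p + 1) / 4 = p / 4 → (chainGraph k).Adj (⟨p / 4, hlt⟩, a) (⟨p / 4, hlt⟩, b) →
        c (spineVertex k p (by omega)) ≠ c (spineVertex k (p + 1) hp) := by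
      intro a b ha hb ea eb hd hadj
      have e1 : spineVertex k p (by omega) = (⟨p / 4, hlt⟩, a) :=
        Prod.ext rfl (Fin.ext ea.symm)
      have e2 : spineVertex k (p + 1) hp = (⟨p / 4, hlt⟩, b) :=
        Prod.ext (Fin.ext hd) (Fin.ext eb.symm)
      rw [e1, e2]
      exact chain_in_ne k c h _ a b ha hb hadj
    rcases hcase with e | e | e | e
    · exact hin 2 3 (by decide) (by decide) (by simp; omega) (by simp; omega) (by omega)
        (chain_adj_in k _ _ _ (by simp))
    · exact hin 3 4 (by decide) (by decide) (by simp; omega) (by simp; omega) (by omega)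
        (chain_adj_in k _ _ _ (by simp))
    · exact hin 4 5 (by decide) (by decide) (by simp; omega) (by simp; omega) (by omega)
        (chain_adj_in k _ _ _ (by simp))
    · have hlt' : (p + 1) / 4 < k := by omega
      have e1 : spineVertex k p (by omega) = (⟨p / 4, hlt⟩, 5) :=
        Prod.ext rfl (Fin.ext (by simp [spineVertex]; omega))
      have e2 : spineVertex k (p + 1) hp = (⟨(p + 1) / 4, hlt'⟩, 2) :=
        Prod.ext rfl (Fin.ext (by simp [spineVertex]; omega))
      rw [e1, e2]
      exact chain_out_ne k c h _ _ (by simp; omega)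
  refine ⟨key, ?_⟩
  have base : ∀ p (hp : p < 4 * k),
      c (spineVertex k p hp) = c (spineVertex k 0 (by omega)) ↔ p % 2 = 0 := by
    intro p
    induction p with
    | zero => intro hp; simp
    | succ n ih =>
      intro hp
      have h1 := ih (by omega)
      have h2 := key n hp
      omega
  intro p q hp hq
  have h1 := base p hp
  have h2 := base q hq
  omega
end

section
/- Let C be the graph with vertex set {u, u_{11}, u_{12}, u_{13}, u_{21}, u_{22}, u_{23}} whose edges are the 2×3 grid edges u_{i1}–u_{i2} and u_{i2}–u_{i3} for i ∈ {1,2} and u_{1j}–u_{2j} for j ∈ {1,2,3}, together with the two edges u–u_{11} and u–u_{23}. In every 2-star-coloring c of C, the three vertices u, u_{11}, u_{23} do not all receive the same color. Moreover, C is triangle-free. -/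
/-- The clause-gadget graph `C`: vertex `0` is `u`, vertices `1,2,3` are
`u_{11}, u_{12}, u_{13}` and vertices `4,5,6` are `u_{21}, u_{22}, u_{23}`;
edges are those of the 2×3 grid together with `u–u_{11}` and `u–u_{23}`. -/
def clauseGadget : SimpleGraph (Fin 7) :=
  SimpleGraph.fromEdgeSet
    {s(1,2), s(2,3), s(4,5), s(5,6),
     s(1,4), s(2,5), s(3,6),
     s(0,1), s(0,6)}

/-- In every 2-star-coloring of the clause-gadget, the three
clause-vertices `u`, `u_{11}`, `u_{23}` do not all receive the same color.
Moreover, the clause-gadget is triangle-free. -/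
theorem clauseGadget_not_monochromatic_and_triangleFree :
    (∀ c : Fin 7 → Fin 2, IsStarColoring clauseGadget c →
      ¬(c 0 = c 1 ∧ c 1 = c 6)) ∧
    clauseGadget.CliqueFree 3 := by
  have adj : ∀ x y : Fin 7, clauseGadget.Adj x y ↔
      (s(x, y) ∈ ([s(1,2), s(2,3), s(4,5), s(5,6), s(1,4), s(2,5), s(3,6),
        s(0,1), s(0,6)] : List (Sym2 (Fin 7)))) := by
    intro x y
    simp only [clauseGadget, SimpleGraph.fromEdgeSet_adj, Set.mem_insert_iff,
      Set.mem_singleton_iff]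
    revert x y
    decide
  constructor
  · rintro c ⟨-, h⟩ ⟨h01, h16⟩
    -- A neighbour of `1` or `6` sharing the common color would give a path on four vertices.
    have p2 := h 2 1 0 6 (by decide) (by decide) (by decide) (by decide) (by decide) (by decide)
      ((adj _ _).2 (by decide)) ((adj _ _).2 (by decide)) ((adj _ _).2 (by decide))
    have p4 := h 4 1 0 6 (by decide) (by decide) (by decide) (by decide) (by decide) (by decide)
      ((adj _ _).2 (by decide)) ((adj _ _).2 (by decide)) ((adj _ _).2 (by decide))
    have p3 := h 3 6 0 1 (by decide) (by decide) (by decide) (by decide) (by decide) (by decide)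
      ((adj _ _).2 (by decide)) ((adj _ _).2 (by decide)) ((adj _ _).2 (by decide))
    have p5 := h 5 6 0 1 (by decide) (by decide) (by decide) (by decide) (by decide) (by decide)
      ((adj _ _).2 (by decide)) ((adj _ _).2 (by decide)) ((adj _ _).2 (by decide))
    -- So `3, 2, 5, 4` all have the other color and form a path.
    have q := h 3 2 5 4 (by decide) (by decide) (by decide) (by decide) (by decide) (by decide)
      ((adj _ _).2 (by decide)) ((adj _ _).2 (by decide)) ((adj _ _).2 (by decide))
    omega
  · intro s hs
    obtain ⟨a, b, d, hab, had, hbd, -⟩ := SimpleGraph.is3Clique_iff.1 hs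
    rw [adj] at hab had hbd
    revert a b d
    decide
end

section
/- Let G be any finite simple graph, and let H be the graph obtained from G by attaching a copy of K_6 at each vertex: for every vertex v of G, add five new vertices (distinct for different v), make these five new vertices pairwise adjacent, and make each of them adjacent to v, so that v together with its five new vertices induces a complete graph K_6 in H. Then H admits a 3-star-coloring if and only if G admits a proper 3-coloring (a coloring with 3 colors in which adjacent vertices always receive distinct colors). -/
/-- The graph `H` obtained from `G` by attaching a copy of `K_6` at each vertex:
for every vertex `v` of `G` we add five new vertices `(v, 0), …, (v, 4)`, make
them pairwise adjacent, and make each of them adjacent to `v`, so that `v`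
together with its five new vertices induces a `K_6`. -/
def attachK6 {V : Type*} (G : SimpleGraph V) : SimpleGraph (V ⊕ V × Fin 5) :=
  SimpleGraph.fromRel (fun x y =>
    match x, y with
    | Sum.inl u, Sum.inl v => G.Adj u v
    | Sum.inl u, Sum.inr (v, _) => u = v
    | Sum.inr (u, _), Sum.inr (v, _) => u = v
    | _, _ => False)

set_option synthInstance.maxHeartbeats 400000 in
set_option synthInstance.maxSize 4000 in
set_option maxRecDepth 100000 in
set_option maxHeartbeats 1000000 in
lemma pigeon_aux : ∀ x a b c d e : Fin 3,
    a = x ∨ b = x ∨ c = x ∨ d = x ∨ e = x ∨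
    (a = b ∧ b = c) ∨ (a = b ∧ b = d) ∨ (a = b ∧ b = e) ∨ (a = c ∧ c = d) ∨ (a = c ∧ c = e) ∨
    (a = d ∧ d = e) ∨ (b = c ∧ c = d) ∨ (b = c ∧ c = e) ∨ (b = d ∧ d = e) ∨ (c = d ∧ d = e) := by
  decide

lemma adj_new {V : Type*} (G : SimpleGraph V) (v : V) (i j : Fin 5) (h : i ≠ j) :
    (attachK6 G).Adj (Sum.inr (v, i)) (Sum.inr (v, j)) := by
  simp [attachK6, h]

lemma exists_same {V : Type*} (G : SimpleGraph V) (c : V ⊕ V × Fin 5 → Fin 3)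
    (h : IsStarColoring (attachK6 G) c) (v : V) : ∃ i, c (Sum.inr (v, i)) = c (Sum.inl v) := by
  have key : ∀ i j k : Fin 5, i ≠ j → j ≠ k → i ≠ k →
      ¬ (c (Sum.inr (v, i)) = c (Sum.inr (v, j)) ∧ c (Sum.inr (v, j)) = c (Sum.inr (v, k))) :=
    fun i j k hij hjk hik =>
      h.1 _ _ _ (adj_new G v i j hij) (adj_new G v j k hjk) (adj_new G v i k hik)
  rcases pigeon_aux (c (Sum.inl v)) (c (Sum.inr (v, 0))) (c (Sum.inr (v, 1))) (c (Sum.inr (v, 2)))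
    (c (Sum.inr (v, 3))) (c (Sum.inr (v, 4))) with
    h | h | h | h | h | h | h | h | h | h | h | h | h | h | h
  iterate 5 exact ⟨_, h⟩
  all_goals exact absurd h (key _ _ _ (by decide) (by decide) (by decide))

/-- The base vertex of the gadget containing a vertex. -/
def gadgetBase {V : Type*} : V ⊕ V × Fin 5 → V
  | Sum.inl v => v
  | Sum.inr (v, _) => v

/-- The extended coloring. -/
def extColor {V : Type*} (c : V → Fin 3) : V ⊕ V × Fin 5 → Fin 3
  | Sum.inl v => c v
  | Sum.inr (v, i) => c v + ![0, 1, 1, 2, 2] i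

lemma base_eq {V : Type*} (G : SimpleGraph V) (c : V → Fin 3)
    (hc : ∀ u v : V, G.Adj u v → c u ≠ c v) (x y : V ⊕ V × Fin 5)
    (h : (attachK6 G).Adj x y) (hxy : extColor c x = extColor c y) :
    gadgetBase x = gadgetBase y := by
  rcases x with u | ⟨u, i⟩ <;> rcases y with v | ⟨v, j⟩ <;>
    simp [attachK6, gadgetBase, extColor] at h hxy ⊢
  · rcases h.2 with h | h
    · exact absurd hxy (hc _ _ h)
    · exact absurd hxy.symm (hc _ _ h)
  · exact h
  · exact h.symm
  · rcases h.2 with h | h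
    · exact h
    · exact h.symm

lemma offsets_two : ∀ i j : Fin 5, (![0, 1, 1, 2, 2] i : Fin 3) = 0 → 
    (![0, 1, 1, 2, 2] j : Fin 3) = 0 → i = j := by
  decide

lemma offsets_three : ∀ i j k : Fin 5, (![0, 1, 1, 2, 2] i : Fin 3) = ![0, 1, 1, 2, 2] j →
    (![0, 1, 1, 2, 2] j : Fin 3) = ![0, 1, 1, 2, 2] k → i = j ∨ j = k ∨ i = k := by
  decide

lemma no_three {V : Type*} (c : V → Fin 3) (x y z : V ⊕ V × Fin 5)
    (hxy : x ≠ y) (hyz : y ≠ z) (hxz : x ≠ z)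
    (b1 : gadgetBase x = gadgetBase y) (b2 : gadgetBase y = gadgetBase z)
    (c1 : extColor c x = extColor c y) (c2 : extColor c y = extColor c z) : False := by
  rcases x with u | ⟨u, i⟩ <;> rcases y with v | ⟨v, j⟩ <;> rcases z with w | ⟨w, k⟩ <;>
    simp only [gadgetBase] at b1 b2 <;> subst b1 b2 <;>
    simp only [extColor, add_right_inj, left_eq_add, add_eq_left, ne_eq, not_true_eq_false,
      Sum.inr.injEq, Prod.mk.injEq, true_and] at c1 c2 hxy hyz hxz
  · rw [c1] at c2
    exact hyz (offsets_two _ _ c1 (by simpa using c2.symm))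
  · exact hxz (offsets_two _ _ c1 c2)
  · exact hxy (offsets_two _ _ (c1.trans c2) c2)
  · rcases offsets_three _ _ _ c1 c2 with h | h | h
    · exact hxy h
    · exact hyz h
    · exact hxz h

/-- For any finite simple graph `G`, the graph `H` obtained from
`G` by attaching a copy of `K_6` at each vertex admits a 3-star-coloring if and
only if `G` admits a proper 3-coloring. -/
theorem attachK6_three_star_colorable_iff_three_colorable
    {V : Type*} [Fintype V] (G : SimpleGraph V) :
    (∃ c : V ⊕ V × Fin 5 → Fin 3, IsStarColoring (attachK6 G) c) ↔
    (∃ c : V → Fin 3, ∀ u v : V, G.Adj u v → c u ≠ c v) := by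
  constructor
  · rintro ⟨c, hc⟩
    refine ⟨fun v => c (Sum.inl v), fun u v huv he => ?_⟩
    obtain ⟨i, hi⟩ := exists_same G c hc u
    obtain ⟨j, hj⟩ := exists_same G c hc v
    have hne := huv.ne
    refine hc.2 (Sum.inr (u, i)) (Sum.inl u) (Sum.inl v) (Sum.inr (v, j)) (by simp) (by simp)
      (by simp [hne]) (by simp [hne]) (by simp) (by simp) ?_ ?_ ?_ ⟨hi, he, hj.symm⟩
    · simp [attachK6]
    · simp [attachK6, hne, huv]
    · simp [attachK6]
  · rintro ⟨c, hc⟩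
    refine ⟨extColor c, ?_, ?_⟩
    · rintro x y z hxy hyz hxz ⟨h1, h2⟩
      exact no_three c x y z hxy.ne hyz.ne hxz.ne (base_eq G c hc _ _ hxy h1)
        (base_eq G c hc _ _ hyz h2) h1 h2
    · rintro x y z _ nxy nxz _ nyz _ _ hxy hyz _ ⟨h1, h2, _⟩
      exact no_three c x y z nxy nyz nxz (base_eq G c hc _ _ hxy h1)
        (base_eq G c hc _ _ hyz h2) h1 h2
end
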